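/- Let (q1,p1,q2,p2) be a rational solution of A5^(2)(α0,α1,α2,α3) and let H be its Hamiltonian. Then, along the cocompact filter on ℂ (i.e., as |t| → ∞), H(t) + t/4 tends to (3/4)·(α0+α1+α3)² − (1/2)·(−2α0+α3)·(−2α1+α3) − 3·(α0+α1)·α3. -/

import Mathlib

open Filter Topology Polynomial

/-- Evaluation of a rational function with complex coefficients at a point,
using its reduced numerator and denominator. -/
noncomputable def evR (f : RatFunc ℂ) (t : ℂ) : ℂ := f.num.eval t / f.denom.eval t

/-- A rational function has no pole at `c` if its reduced denominator does not vanish at `c`. -/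
def NoPoleAt (f : RatFunc ℂ) (c : ℂ) : Prop := f.denom.eval c ≠ 0

/-- `(q1, p1, q2, p2)` is a rational solution of the Sasano system
`A5^(2)(α0, α1, α2, α3)` (the parameter `α2` does not occur in the equations):
the four differential equations hold at every point `t ∈ ℂ` which is not a pole
of any of `q1, p1, q2, p2`. -/
def IsSasanoSol (a0 a1 a3 : ℂ) (q1 p1 q2 p2 : RatFunc ℂ) : Prop :=
  ∀ t : ℂ, NoPoleAt q1 t → NoPoleAt p1 t → NoPoleAt q2 t → NoPoleAt p2 t →
    (t * deriv (evR q1) t =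
      2 * (evR q1 t) ^ 2 * evR p1 t - (evR q1 t) ^ 2 + (a0 + a1 + a3) * evR q1 t
        - t + 4 * t * evR p2 t + 2 * evR q1 t * evR q2 t * evR p2 t) ∧
    (t * deriv (evR p1) t =
      -2 * evR q1 t * (evR p1 t) ^ 2 + 2 * evR q1 t * evR p1 t
        - (a0 + a1 + a3) * evR p1 t + a0 - 2 * evR p1 t * evR q2 t * evR p2 t) ∧
    (t * deriv (evR q2) t =
      2 * (evR q2 t) ^ 2 * evR p2 t - (evR q2 t) ^ 2 + (a0 + a1 + a3) * evR q2 t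
        - t + 4 * t * evR p1 t + 2 * evR q1 t * evR p1 t * evR q2 t) ∧
    (t * deriv (evR p2) t =
      -2 * evR q2 t * (evR p2 t) ^ 2 + 2 * evR q2 t * evR p2 t
        - (a0 + a1 + a3) * evR p2 t + a1 - 2 * evR q1 t * evR p1 t * evR p2 t)

/-- The Hamiltonian of a solution of the Sasano system, as a rational function. -/
noncomputable def sasanoH (a0 a1 a3 : ℂ) (q1 p1 q2 p2 : RatFunc ℂ) : RatFunc ℂ :=
  q1 ^ 2 * p1 ^ 2 - q1 ^ 2 * p1 + RatFunc.C (a0 + a1 + a3) * q1 * p1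
    - RatFunc.C a0 * q1 - RatFunc.X * p1
  + q2 ^ 2 * p2 ^ 2 - q2 ^ 2 * p2 + RatFunc.C (a0 + a1 + a3) * q2 * p2
    - RatFunc.C a1 * q2 - RatFunc.X * p2
  + 4 * RatFunc.X * p1 * p2 + 2 * q1 * p1 * q2 * p2

open Asymptotics Bornology

/-!
A rational function has an integral order of growth at infinity, and `t f'` grows no faster than
`f`. In terms of `x = q₁p₁ + q₂p₂` the system reads

* `t qᵢ' = qᵢ (2x - qᵢ) + s qᵢ + t (4pⱼ - 1)`,
* `t pᵢ' = pᵢ (2(qᵢ - x) - s) + αᵢ₋₁`,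

for `{i, j} = {1, 2}` and `s = α₀ + α₁ + α₃`. Balancing orders of growth in the `q`-equations shows
that neither `pᵢ` vanishes at infinity; the `p`-equations then bound `qᵢ - x`, and a second balance
bounds `qᵢ` and `t (4pᵢ - 1)`. Hence `pᵢ → 1/4`, so the `p`-equations give the limits of `qᵢ - x`,
and these give the limit of `x = (q₁ + q₂)/4 + o(1)`. The Hamiltonian is a polynomial in `x`, `qᵢ`
and `pᵢ`, up to `-t/4` and a term which tends to `0`.
-/

section Asymptotics

variable {α 𝕜 : Type*} [NormedField 𝕜] {l : Filter α}

theorem isBigO_of_mul_left {p f g : α → 𝕜} (hp : ∀ᶠ x in l, p x ≠ 0)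
    (h : (fun x => p x * f x) =O[l] fun x => p x * g x) : f =O[l] g :=
  ((isBigO_mul_iff_isBigO_div hp).1 h).trans_eventuallyEq <|
    hp.mono fun _ hx => mul_div_cancel_left₀ _ hx

theorem eventually_ne_zero_of_one_isBigO {p : α → 𝕜} (h : (fun _ => (1 : 𝕜)) =O[l] p) :
    ∀ᶠ x in l, p x ≠ 0 :=
  h.eq_zero_imp.mono fun _ hx h0 => one_ne_zero (hx h0)

theorem tendsto_mul_zero_of_isBigO_one {f g : α → 𝕜} (hf : f =O[l] fun _ => (1 : 𝕜))
    (hg : Tendsto g l (𝓝 0)) : Tendsto (fun x => f x * g x) l (𝓝 0) :=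
  isBoundedUnder_le_mul_tendsto_zero ((isBigO_one_iff 𝕜).1 hf) hg

theorem one_isBigO_id_cobounded : (fun _ => (1 : 𝕜)) =O[cobounded 𝕜] fun t => t :=
  (isLittleO_const_id_cobounded (1 : 𝕜)).isBigO

theorem tendsto_zero_of_id_mul_isBigO_one {f : 𝕜 → 𝕜}
    (hf : (fun t => t * f t) =O[cobounded 𝕜] fun _ => (1 : 𝕜)) :
    Tendsto f (cobounded 𝕜) (𝓝 0) := by
  refine (tendsto_mul_zero_of_isBigO_one hf tendsto_inv₀_cobounded).congr' ?_
  filter_upwards [eventually_ne_cobounded (0 : 𝕜)] with t ht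
  field_simp

theorem not_id_isBigO_one_cobounded [NeBot (cobounded 𝕜)] :
    ¬ (fun t : 𝕜 => t) =O[cobounded 𝕜] fun _ => (1 : 𝕜) :=
  (isLittleO_const_id_cobounded (1 : 𝕜)).not_isBigO (.of_forall fun _ => one_ne_zero)

end Asymptotics

section QuotientsOfPolynomials

variable {𝕜 : Type*} [NormedField 𝕜]

theorem eventually_eval_ne_zero_cobounded {p : 𝕜[X]} (hp : p ≠ 0) :
    ∀ᶠ t in cobounded 𝕜, p.eval t ≠ 0 :=
  (eventually_cofinite_not_isRoot hp).filter_mono (le_cofinite 𝕜)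

theorem isBigO_eval_div_eval {a b c d : 𝕜[X]} (hb : b ≠ 0) (hd : d ≠ 0)
    (h : (a * d).degree ≤ (c * b).degree) :
    (fun t => a.eval t / b.eval t) =O[cobounded 𝕜] fun t => c.eval t / d.eval t := by
  have hbd := eventually_eval_ne_zero_cobounded (mul_ne_zero hb hd)
  refine isBigO_of_mul_left hbd ((isBigO_cobounded_of_degree_le h).congr' ?_ ?_) <;>
  · filter_upwards [hbd] with t ht
    obtain ⟨hbt, hdt⟩ := mul_ne_zero_iff.1 (eval_mul (R := 𝕜) ▸ ht)
    simp only [eval_mul]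
    field_simp

theorem degree_X_mul_wronskian_le {R : Type*} [CommRing R] [NoZeroDivisors R] (a b : R[X]) :
    (X * wronskian a b).degree ≤ (a * b).degree := by
  nontriviality R
  rcases eq_or_ne a 0 with rfl | ha
  · simp
  rcases eq_or_ne b 0 with rfl | hb
  · simp
  rw [mul_comm, degree_mul_X, degree_mul]
  exact Nat.WithBot.add_one_le_of_lt (degree_wronskian_lt_add ha hb)

end QuotientsOfPolynomials

section RationalFunctions

theorem evR_C (c : ℂ) : evR (RatFunc.C c) = fun _ => c :=
  funext fun _ => RatFunc.eval_C _ _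

theorem evR_X : evR RatFunc.X = fun t => t :=
  funext fun _ => RatFunc.eval_X _ _

theorem evR_zero : evR 0 = fun _ => 0 :=
  funext fun _ => RatFunc.eval_zero _ _

theorem evR_one : evR 1 = fun _ => 1 :=
  funext fun _ => RatFunc.eval_one _ _

theorem eventually_noPoleAt (f : RatFunc ℂ) : ∀ᶠ t in cobounded ℂ, NoPoleAt f t :=
  eventually_eval_ne_zero_cobounded f.denom_ne_zero

/-- The germ at infinity of (the evaluation of) a rational function. Passing to germs makes
evaluation a ring homomorphism, which `evR` is not at the poles. -/
noncomputable def evRGerm : RatFunc ℂ →+* (cobounded ℂ).Germ ℂ where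
  toFun f := (evR f : (cobounded ℂ).Germ ℂ)
  map_zero' := congrArg _ evR_zero
  map_one' := congrArg _ evR_one
  map_add' f g := Germ.coe_eq.2 <| by
    filter_upwards [eventually_noPoleAt f, eventually_noPoleAt g] with t hf hg
    exact RatFunc.eval_add _ _ hf hg
  map_mul' f g := Germ.coe_eq.2 <| by
    filter_upwards [eventually_noPoleAt f, eventually_noPoleAt g] with t hf hg
    exact RatFunc.eval_mul _ _ hf hg

theorem evRGerm_C (c : ℂ) :
    evRGerm (RatFunc.C c) = ((fun _ => c : ℂ → ℂ) : (cobounded ℂ).Germ ℂ) :=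
  congrArg _ (evR_C c)

theorem evRGerm_X : evRGerm RatFunc.X = ((fun t => t : ℂ → ℂ) : (cobounded ℂ).Germ ℂ) :=
  congrArg _ evR_X

-- Orders of growth are integers, so there is no room between `O(g)` and `t g = O(f)`.
theorem evR_isBigO_or_id_mul_isBigO (f g : RatFunc ℂ) :
    evR f =O[cobounded ℂ] evR g ∨ (fun t => t * evR g t) =O[cobounded ℂ] evR f := by
  rcases le_or_gt (f.num * g.denom).degree (g.num * f.denom).degree with h | h
  · exact .inl (isBigO_eval_div_eval f.denom_ne_zero g.denom_ne_zero h)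
  · have hdeg : (g.num * X * f.denom).degree ≤ (f.num * g.denom).degree := by
      rw [mul_right_comm, degree_mul_X]
      exact Nat.WithBot.add_one_le_of_lt h
    refine .inr ((isBigO_eval_div_eval g.denom_ne_zero f.denom_ne_zero hdeg).congr_left fun t => ?_)
    simp only [evR, eval_mul, eval_X]
    ring

theorem evR_isBigO_total (f g : RatFunc ℂ) :
    evR f =O[cobounded ℂ] evR g ∨ evR g =O[cobounded ℂ] evR f :=
  (evR_isBigO_or_id_mul_isBigO f g).imp_right fun h => .trans
    (by simpa using one_isBigO_id_cobounded.mul (isBigO_refl (evR g) (cobounded ℂ))) h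

theorem evR_isBigO_one_or_id_isBigO (f : RatFunc ℂ) :
    evR f =O[cobounded ℂ] (fun _ => (1 : ℂ)) ∨ (fun t => t) =O[cobounded ℂ] evR f := by
  simpa only [evR_one, mul_one] using evR_isBigO_or_id_mul_isBigO f 1

theorem one_isBigO_evR_or_id_mul_isBigO_one (f : RatFunc ℂ) :
    (fun _ => (1 : ℂ)) =O[cobounded ℂ] evR f ∨
      (fun t => t * evR f t) =O[cobounded ℂ] fun _ => (1 : ℂ) := by
  simpa only [evR_one, mul_one] using evR_isBigO_or_id_mul_isBigO 1 f

theorem deriv_evR {f : RatFunc ℂ} {t : ℂ} (ht : NoPoleAt f t) :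
    deriv (evR f) t = (wronskian f.denom f.num).eval t / f.denom.eval t ^ 2 := by
  have h : HasDerivAt (evR f) _ t := (f.num.hasDerivAt t).div (f.denom.hasDerivAt t) ht
  rw [h.deriv, wronskian]
  simp only [eval_sub, eval_mul]
  ring

theorem id_mul_deriv_evR_isBigO_sub_const (f : RatFunc ℂ) (c : ℂ) :
    (fun t => t * deriv (evR f) t) =O[cobounded ℂ] fun t => evR f t - c := by
  have hd := f.denom_ne_zero
  have hW : wronskian f.denom (f.num - C c * f.denom) = wronskian f.denom f.num := by
    simp only [wronskian, derivative_sub, derivative_C_mul]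
    ring
  have hdeg : (X * wronskian f.denom f.num * f.denom).degree ≤
      ((f.num - C c * f.denom) * (f.denom * f.denom)).degree := by
    rw [← mul_assoc, degree_mul, degree_mul (q := f.denom), mul_comm (f.num - _), ← hW]
    gcongr
    exact degree_X_mul_wronskian_le _ _
  refine (isBigO_eval_div_eval (mul_ne_zero hd hd) hd hdeg).congr' ?_ ?_
  · filter_upwards [eventually_noPoleAt f] with t ht
    rw [deriv_evR ht, eval_mul, eval_X, eval_mul, mul_div_assoc, sq]
  · filter_upwards [eventually_noPoleAt f] with t ht
    rw [eval_sub, eval_mul, eval_C, sub_div, mul_div_cancel_right₀ _ ht, evR]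

theorem id_mul_deriv_evR_isBigO (f : RatFunc ℂ) :
    (fun t => t * deriv (evR f) t) =O[cobounded ℂ] evR f := by
  simpa using id_mul_deriv_evR_isBigO_sub_const f 0

end RationalFunctions

/-- The phase-space pairing `x = q₁p₁ + q₂p₂`. The variables `qⱼ, pⱼ` enter the equations for
`qᵢ, pᵢ` only through `x` and the term `4 t pⱼ`. -/
noncomputable def pairing (q1 p1 q2 p2 : RatFunc ℂ) (t : ℂ) : ℂ :=
  evR q1 t * evR p1 t + evR q2 t * evR p2 t

theorem pairing_comm (q1 p1 q2 p2 : RatFunc ℂ) : pairing q2 p2 q1 p1 = pairing q1 p1 q2 p2 :=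
  funext fun _ => add_comm _ _

theorem evR_sasanoH_add_div_four (a0 a1 a3 : ℂ) (q1 p1 q2 p2 : RatFunc ℂ) :
    (fun t => evR (sasanoH a0 a1 a3 q1 p1 q2 p2) t + t / 4) =ᶠ[cobounded ℂ] fun t =>
      pairing q1 p1 q2 p2 t ^ 2 - evR q1 t ^ 2 * evR p1 t - evR q2 t ^ 2 * evR p2 t
        + (a0 + a1 + a3) * pairing q1 p1 q2 p2 t - a0 * evR q1 t - a1 * evR q2 t
        + t * (4 * evR p1 t - 1) * (evR p2 t - 1 / 4) := by
  have hH : evRGerm (sasanoH a0 a1 a3 q1 p1 q2 p2) = ((fun t =>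
      evR q1 t ^ 2 * evR p1 t ^ 2 - evR q1 t ^ 2 * evR p1 t + (a0 + a1 + a3) * evR q1 t * evR p1 t
        - a0 * evR q1 t - t * evR p1 t
      + evR q2 t ^ 2 * evR p2 t ^ 2 - evR q2 t ^ 2 * evR p2 t + (a0 + a1 + a3) * evR q2 t * evR p2 t
        - a1 * evR q2 t - t * evR p2 t
      + 4 * t * evR p1 t * evR p2 t + 2 * evR q1 t * evR p1 t * evR q2 t * evR p2 t : ℂ → ℂ) :
      (cobounded ℂ).Germ ℂ) := by
    simp only [sasanoH, map_add, map_sub, map_mul, map_pow, map_ofNat, evRGerm_C, evRGerm_X]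
    rfl
  filter_upwards [Germ.coe_eq.1 hH] with t ht
  rw [ht, pairing]
  ring

namespace IsSasanoSol

variable {a0 a1 a3 : ℂ} {q1 p1 q2 p2 : RatFunc ℂ}

theorem symm (h : IsSasanoSol a0 a1 a3 q1 p1 q2 p2) : IsSasanoSol a1 a0 a3 q2 p2 q1 p1 := by
  intro t hq2 hp2 hq1 hp1
  obtain ⟨eq1, ep1, eq2, ep2⟩ := h t hq1 hp1 hq2 hp2
  refine ⟨eq2.trans ?_, ep2.trans ?_, eq1.trans ?_, ep1.trans ?_⟩ <;> ring

theorem eventually_q1_eq (h : IsSasanoSol a0 a1 a3 q1 p1 q2 p2) :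
    ∀ᶠ t in cobounded ℂ, t * deriv (evR q1) t =
      evR q1 t * (2 * pairing q1 p1 q2 p2 t - evR q1 t) + (a0 + a1 + a3) * evR q1 t
        + t * (4 * evR p2 t - 1) := by
  filter_upwards [eventually_noPoleAt q1, eventually_noPoleAt p1, eventually_noPoleAt q2,
    eventually_noPoleAt p2] with t hq1 hp1 hq2 hp2
  rw [(h t hq1 hp1 hq2 hp2).1, pairing]
  ring

theorem eventually_p1_eq (h : IsSasanoSol a0 a1 a3 q1 p1 q2 p2) :
    ∀ᶠ t in cobounded ℂ, t * deriv (evR p1) t =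
      evR p1 t * (2 * (evR q1 t - pairing q1 p1 q2 p2 t) - (a0 + a1 + a3)) + a0 := by
  filter_upwards [eventually_noPoleAt q1, eventually_noPoleAt p1, eventually_noPoleAt q2,
    eventually_noPoleAt p2] with t hq1 hp1 hq2 hp2
  rw [(h t hq1 hp1 hq2 hp2).2.1, pairing]
  ring

theorem q1_sub_pairing_isBigO_one_of_one_isBigO_p1 (h : IsSasanoSol a0 a1 a3 q1 p1 q2 p2)
    (hp : (fun _ => (1 : ℂ)) =O[cobounded ℂ] evR p1) :
    (fun t => evR q1 t - pairing q1 p1 q2 p2 t) =O[cobounded ℂ] fun _ => (1 : ℂ) := by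
  have hprod : (fun t => evR p1 t * (2 * (evR q1 t - pairing q1 p1 q2 p2 t) - (a0 + a1 + a3)))
      =O[cobounded ℂ] fun t => evR p1 t * 1 := by
    have ha0 : (fun _ => a0) =O[cobounded ℂ] evR p1 :=
      (isBigO_const_const a0 one_ne_zero _).trans hp
    refine ((id_mul_deriv_evR_isBigO p1).sub ha0).congr' ?_ (by simp)
    filter_upwards [h.eventually_p1_eq] with t ht
    rw [ht]
    ring
  have hdiff := isBigO_of_mul_left (eventually_ne_zero_of_one_isBigO hp) hprod
  refine ((hdiff.add (isBigO_const_const (a0 + a1 + a3) one_ne_zero _)).const_mul_left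
    (1 / 2)).congr_left fun t => ?_
  ring

-- If `q₁` is bounded, the `q₁`-equation makes `t` bounded; otherwise `t = O(q₁)` and dividing the
-- equation by `q₁` bounds `2x - q₁`.
theorem not_q1_isBigO_one_iff_of_id_mul_p2_isBigO_one (h : IsSasanoSol a0 a1 a3 q1 p1 q2 p2)
    (hp : (fun t => t * evR p2 t) =O[cobounded ℂ] fun _ => (1 : ℂ)) :
    ¬ (evR q1 =O[cobounded ℂ] (fun _ => (1 : ℂ)) ↔
      (fun t => 2 * pairing q1 p1 q2 p2 t - evR q1 t) =O[cobounded ℂ] fun _ => (1 : ℂ)) := by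
  intro hiff
  have hlin := (id_mul_deriv_evR_isBigO q1).sub
    ((isBigO_refl (evR q1) (cobounded ℂ)).const_mul_left (a0 + a1 + a3))
  have hp4 := hp.const_mul_left 4
  have hq : evR q1 =O[cobounded ℂ] fun _ => (1 : ℂ) := by
    refine (evR_isBigO_one_or_id_isBigO q1).elim id fun hid => hiff.2 ?_
    have hone := one_isBigO_id_cobounded.trans hid
    refine isBigO_of_mul_left (eventually_ne_zero_of_one_isBigO hone)
      (((hlin.add hid).sub (hp4.trans hone)).congr' ?_ (by simp))
    filter_upwards [h.eventually_q1_eq] with t ht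
    rw [ht]
    ring
  have hprod := hq.mul (hiff.1 hq)
  rw [one_mul] at hprod
  refine not_id_isBigO_one_cobounded (((hprod.sub (hlin.trans hq)).add hp4).congr' ?_ .rfl)
  filter_upwards [h.eventually_q1_eq] with t ht
  rw [ht]
  ring

theorem not_id_mul_p2_isBigO_one_of_q2_isBigO_q1 (h : IsSasanoSol a0 a1 a3 q1 p1 q2 p2)
    (hq : evR q2 =O[cobounded ℂ] evR q1)
    (hp1 : (fun t => t * evR p1 t) =O[cobounded ℂ] fun _ => (1 : ℂ)) :
    ¬ (fun t => t * evR p2 t) =O[cobounded ℂ] fun _ => (1 : ℂ) := by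
  intro hp2
  have hx : (fun t => 2 * pairing q1 p1 q2 p2 t) =o[cobounded ℂ] evR q1 := by
    have h1 := (isBigO_refl (evR q1) (cobounded ℂ)).mul_isLittleO
      ((isLittleO_one_iff ℂ).2 (tendsto_zero_of_id_mul_isBigO_one hp1))
    have h2 := hq.mul_isLittleO ((isLittleO_one_iff ℂ).2 (tendsto_zero_of_id_mul_isBigO_one hp2))
    simp only [mul_one] at h1 h2
    exact (h1.add h2).const_mul_left 2
  exact h.not_q1_isBigO_one_iff_of_id_mul_p2_isBigO_one hp2
    ⟨(hx.isBigO.sub (isBigO_refl _ _)).trans, hx.right_isBigO_sub.trans ∘ IsBigO.symm⟩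

theorem not_id_mul_p2_isBigO_one (h : IsSasanoSol a0 a1 a3 q1 p1 q2 p2)
    (hp1 : (fun t => t * evR p1 t) =O[cobounded ℂ] fun _ => (1 : ℂ)) :
    ¬ (fun t => t * evR p2 t) =O[cobounded ℂ] fun _ => (1 : ℂ) := fun hp2 =>
  (evR_isBigO_total q2 q1).elim
    (fun hq => h.not_id_mul_p2_isBigO_one_of_q2_isBigO_q1 hq hp1 hp2)
    (fun hq => h.symm.not_id_mul_p2_isBigO_one_of_q2_isBigO_q1 hq hp2 hp1)

theorem one_isBigO_p1 (h : IsSasanoSol a0 a1 a3 q1 p1 q2 p2) :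
    (fun _ => (1 : ℂ)) =O[cobounded ℂ] evR p1 := by
  refine (one_isBigO_evR_or_id_mul_isBigO_one p1).resolve_right fun hp1 => ?_
  have hp2 := (one_isBigO_evR_or_id_mul_isBigO_one p2).resolve_right
    (h.not_id_mul_p2_isBigO_one hp1)
  have hx : (fun t => 2 * (evR q2 t - pairing q2 p2 q1 p1 t)) =O[cobounded ℂ] fun _ => (1 : ℂ) :=
    (h.symm.q1_sub_pairing_isBigO_one_of_one_isBigO_p1 hp2).const_mul_left 2
  refine h.symm.not_q1_isBigO_one_iff_of_id_mul_p2_isBigO_one hp1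
    ⟨fun hq => (hq.sub hx).congr_left fun t => ?_, fun hq => (hq.add hx).congr_left fun t => ?_⟩ <;>
  ring

theorem q1_sub_pairing_isBigO_one (h : IsSasanoSol a0 a1 a3 q1 p1 q2 p2) :
    (fun t => evR q1 t - pairing q1 p1 q2 p2 t) =O[cobounded ℂ] fun _ => (1 : ℂ) :=
  h.q1_sub_pairing_isBigO_one_of_one_isBigO_p1 h.one_isBigO_p1

theorem q1_sub_q2_isBigO_one (h : IsSasanoSol a0 a1 a3 q1 p1 q2 p2) :
    (fun t => evR q1 t - evR q2 t) =O[cobounded ℂ] fun _ => (1 : ℂ) := by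
  refine (h.q1_sub_pairing_isBigO_one.sub h.symm.q1_sub_pairing_isBigO_one).congr_left fun t => ?_
  rw [pairing_comm]
  ring

theorem id_mul_four_mul_p2_sub_one_add_q1_sq_isBigO_q1 (h : IsSasanoSol a0 a1 a3 q1 p1 q2 p2) :
    (fun t => t * (4 * evR p2 t - 1) + evR q1 t ^ 2) =O[cobounded ℂ] evR q1 := by
  have hq := isBigO_refl (evR q1) (cobounded ℂ)
  have hprod := (hq.mul h.q1_sub_pairing_isBigO_one).const_mul_left 2
  simp only [mul_one] at hprod
  refine (((id_mul_deriv_evR_isBigO q1).add hprod).sub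
    (hq.const_mul_left (a0 + a1 + a3))).congr' ?_ .rfl
  filter_upwards [h.eventually_q1_eq] with t ht
  rw [ht]
  ring

-- Adding `q₂` times the relation for `q₁` to `q₁` times the relation for `q₂` gives
-- `t (4x - q₁ - q₂) + q₁q₂ (q₁ + q₂) = O(q₁²)`. As `x` and `q₂` are `q₁ + O(1)`, the left-hand side
-- is `2q₁³ + O(q₁²)`.
theorem q1_cube_isBigO_q1_sq (h : IsSasanoSol a0 a1 a3 q1 p1 q2 p2)
    (hid : (fun t => t) =O[cobounded ℂ] evR q1) :
    (fun t => evR q1 t ^ 3) =O[cobounded ℂ] fun t => evR q1 t ^ 2 := by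
  have hone := one_isBigO_id_cobounded.trans hid
  have hq := isBigO_refl (evR q1) (cobounded ℂ)
  have hr := h.q1_sub_q2_isBigO_one
  have hu := h.q1_sub_pairing_isBigO_one
  have hq2 : evR q2 =O[cobounded ℂ] evR q1 :=
    (hq.sub (hr.trans hone)).congr_left fun t => by ring
  have hrel := (hq2.mul h.id_mul_four_mul_p2_sub_one_add_q1_sq_isBigO_q1).add
    (hq.mul (h.symm.id_mul_four_mul_p2_sub_one_add_q1_sq_isBigO_q1.trans hq2))
  have htu := hid.mul (hu.trans hone)
  have htq := hid.mul hq
  have htq2 := hid.mul hq2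
  have hqr := hq.mul (hq.mul hr)
  have hqr2 := hq2.mul (hq.mul hr)
  simp only [mul_one, ← sq] at hrel htu htq htq2 hqr hqr2
  refine (((((hrel.add (htu.const_mul_left 4)).sub (htq.const_mul_left 3)).add htq2).add
    (hqr.const_mul_left 2)).add hqr2).const_mul_left (1 / 2) |>.congr_left fun t => ?_
  simp only [pairing]
  ring

theorem q1_isBigO_one (h : IsSasanoSol a0 a1 a3 q1 p1 q2 p2) :
    evR q1 =O[cobounded ℂ] fun _ => (1 : ℂ) := by
  refine (evR_isBigO_one_or_id_isBigO q1).elim id fun hid => ?_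
  have hq := eventually_ne_zero_of_one_isBigO (one_isBigO_id_cobounded.trans hid)
  exact isBigO_of_mul_left (hq.mono fun _ => pow_ne_zero 2) <|
    (h.q1_cube_isBigO_q1_sq hid).congr (fun _ => pow_succ _ 2) fun _ => (mul_one _).symm

theorem id_mul_four_mul_p1_sub_one_isBigO_one (h : IsSasanoSol a0 a1 a3 q1 p1 q2 p2) :
    (fun t => t * (4 * evR p1 t - 1)) =O[cobounded ℂ] fun _ => (1 : ℂ) := by
  have hq := h.symm.q1_isBigO_one
  have hq_sq := hq.pow 2
  simp only [one_pow] at hq_sq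
  have hrel := h.symm.id_mul_four_mul_p2_sub_one_add_q1_sq_isBigO_q1.trans hq
  exact (hrel.sub hq_sq).congr_left fun t => add_sub_cancel_right _ _

theorem tendsto_p1 (h : IsSasanoSol a0 a1 a3 q1 p1 q2 p2) :
    Tendsto (evR p1) (cobounded ℂ) (𝓝 (1 / 4)) := by
  have hp := tendsto_zero_of_id_mul_isBigO_one h.id_mul_four_mul_p1_sub_one_isBigO_one
  convert (hp.add_const 1).const_mul (1 / 4) using 2 <;>
  ring

theorem tendsto_p1_sub_one_div_four (h : IsSasanoSol a0 a1 a3 q1 p1 q2 p2) :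
    Tendsto (fun t => evR p1 t - 1 / 4) (cobounded ℂ) (𝓝 0) :=
  tendsto_sub_nhds_zero_iff.2 h.tendsto_p1

theorem tendsto_q1_sub_pairing (h : IsSasanoSol a0 a1 a3 q1 p1 q2 p2) :
    Tendsto (fun t => evR q1 t - pairing q1 p1 q2 p2 t) (cobounded ℂ)
      (𝓝 ((a0 + a1 + a3) / 2 - 2 * a0)) := by
  have hderiv := (id_mul_deriv_evR_isBigO_sub_const p1 (1 / 4)).trans_tendsto
    h.tendsto_p1_sub_one_div_four
  have hquot := ((hderiv.sub_const a0).div h.tendsto_p1 (by norm_num)).add_const (a0 + a1 + a3)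
  convert (hquot.const_mul (1 / 2)).congr' ?_ using 2
  · ring
  · have hp_ne := eventually_ne_zero_of_one_isBigO h.one_isBigO_p1
    filter_upwards [h.eventually_p1_eq, hp_ne] with t ht hp
    rw [Pi.div_apply, ht]
    field_simp
    ring

theorem tendsto_q1_mul_p1_sub_one_div_four (h : IsSasanoSol a0 a1 a3 q1 p1 q2 p2) :
    Tendsto (fun t => evR q1 t * (evR p1 t - 1 / 4)) (cobounded ℂ) (𝓝 0) :=
  tendsto_mul_zero_of_isBigO_one h.q1_isBigO_one h.tendsto_p1_sub_one_div_four

theorem tendsto_pairing (h : IsSasanoSol a0 a1 a3 q1 p1 q2 p2) :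
    Tendsto (pairing q1 p1 q2 p2) (cobounded ℂ) (𝓝 ((a3 - a0 - a1) / 2)) := by
  have hq := h.tendsto_q1_sub_pairing.add h.symm.tendsto_q1_sub_pairing
  have hqp := h.tendsto_q1_mul_p1_sub_one_div_four.add h.symm.tendsto_q1_mul_p1_sub_one_div_four
  convert ((hq.add (hqp.const_mul 4)).const_mul (1 / 2)).congr fun t => ?_ using 2
  · ring
  · simp only [pairing]
    ring

theorem tendsto_q1 (h : IsSasanoSol a0 a1 a3 q1 p1 q2 p2) :
    Tendsto (evR q1) (cobounded ℂ) (𝓝 (a3 - 2 * a0)) := by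
  convert h.tendsto_q1_sub_pairing.add h.tendsto_pairing using 2 <;>
  ring

end IsSasanoSol

theorem sasano_hamiltonian_limit_at_infinity (a0 a1 a2 a3 : ℂ)
    (hpar : a0 + a1 + 2 * a2 + a3 = 1 / 2)
    (q1 p1 q2 p2 : RatFunc ℂ)
    (hsol : IsSasanoSol a0 a1 a3 q1 p1 q2 p2) :
    Tendsto (fun t : ℂ => evR (sasanoH a0 a1 a3 q1 p1 q2 p2) t + t / 4) (cocompact ℂ)
      (𝓝 (3 / 4 * (a0 + a1 + a3) ^ 2
        - 1 / 2 * (-2 * a0 + a3) * (-2 * a1 + a3) - 3 * (a0 + a1) * a3)) := by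
  rw [← Metric.cobounded_eq_cocompact]
  have hx := hsol.tendsto_pairing
  have hq1 := hsol.tendsto_q1
  have hq2 := hsol.symm.tendsto_q1
  have hp1 := hsol.tendsto_p1
  have hp2 := hsol.symm.tendsto_p1
  have hrem := tendsto_mul_zero_of_isBigO_one hsol.id_mul_four_mul_p1_sub_one_isBigO_one
    hsol.symm.tendsto_p1_sub_one_div_four
  have hpoly := (hx.pow 2).sub ((hq1.pow 2).mul hp1) |>.sub ((hq2.pow 2).mul hp2)
    |>.add (hx.const_mul (a0 + a1 + a3)) |>.sub (hq1.const_mul a0) |>.sub (hq2.const_mul a1)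
  convert (hpoly.add hrem).congr' (evR_sasanoH_add_div_four a0 a1 a3 q1 p1 q2 p2).symm using 2
  ring
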